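/- Let N be a nilpotent-independent (NI) subset of M(d,q) and suppose there exist real constants a, k > 0 such that |N_i|/|GL(i,q)| \ge a - k/i for all 1 \le i \le d. Then |N|/|M(d,q)| \ge (a - 3k/d)(1 - q^{-d}) > a - (a + 3k)/d, where |M(d,q)| = q^{d^2}. -/

import Mathlib

open Matrix Finset

/-- `Vinv X` : the "invertible part" subspace, `range (X^d)`. -/
noncomputable def Vinv {F : Type*} [Field F] {d : ℕ} (X : Matrix (Fin d) (Fin d) F) :
    Submodule F (Fin d → F) :=
  LinearMap.range (X.mulVecLin ^ d)

noncomputable def Vnil {F : Type*} [Field F] {d : ℕ} (X : Matrix (Fin d) (Fin d) F) :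
    Submodule F (Fin d → F) :=
  LinearMap.ker (X.mulVecLin ^ d)

open Classical in
/-- The projection of `F^d` onto `Vinv X` with kernel `Vnil X`. -/
noncomputable def fittingProj {F : Type*} [Field F] {d : ℕ} (X : Matrix (Fin d) (Fin d) F) :
    (Fin d → F) →ₗ[F] (Fin d → F) :=
  if h : IsCompl (Vinv X) (Vnil X) then
    (Vinv X).subtype ∘ₗ Submodule.linearProjOfIsCompl (Vinv X) (Vnil X) h
  else 0

/-- `N` is a nilpotent-independent subset of `M(d,q)`. -/
def IsNI {F : Type*} [Field F] {d : ℕ} (N : Set (Matrix (Fin d) (Fin d) F)) : Prop :=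
  (∀ X ∈ N, ∀ g : GL (Fin d) F, (↑g⁻¹ : Matrix (Fin d) (Fin d) F) * X * (↑g : Matrix (Fin d) (Fin d) F) ∈ N) ∧
  (∀ X : Matrix (Fin d) (Fin d) F,
    X ∈ N ↔ LinearMap.toMatrix' (X.mulVecLin ∘ₗ fittingProj X) ∈ N)

/-- the block-diagonal matrix `diag(Y, 0)` of size `d`, for `Y` of size `i ≤ d`. -/
def embedBlock {F : Type*} [Field F] (d : ℕ) {i : ℕ} (Y : Matrix (Fin i) (Fin i) F) :
    Matrix (Fin d) (Fin d) F :=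
  Matrix.of fun r c =>
    if h : (r : ℕ) < i ∧ (c : ℕ) < i then Y ⟨r, h.1⟩ ⟨c, h.2⟩ else 0

/-- `N_i`, the invertible matrices of size `i` whose block-diagonal extension lies in `N`. -/
def NIsub {F : Type*} [Field F] {d : ℕ} (N : Set (Matrix (Fin d) (Fin d) F)) (i : ℕ) :
    Set (GL (Fin i) F) :=
  {Y : GL (Fin i) F | embedBlock d (↑Y : Matrix (Fin i) (Fin i) F) ∈ N}

/-!
By Fitting's lemma every `X` of size `n` is `g * diag(Y, Z) * g⁻¹` with `Y` invertible of size `i`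
and `Z` nilpotent of size `j = n - i`. The presentations `(g, Y, Z)` of a fixed `X` form a torsor
under `GL_i × GL_j`, because a matrix intertwining two such block-diagonal matrices is itself
block-diagonal, and a nilpotent-independent set `N` sees only `Y`. Counting presentations gives
`|N| / |GL_n| = ∑ j, (|N_{n - j}| / |GL_{n - j}|) * f_j` with `f_j = |Nil_j| / |GL_j|`. Taking for
`N` the set of all matrices determines the `f_j`, and hence the law `w_j` of the dimension of the
nilpotent component of a uniformly random matrix. For `x = 1 / q` one gets
`∑ j < n, w_j = 1 - x ^ n` and `w_j ≤ x ^ j * (1 - x ^ n)`, so with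
`k / (n - j) ≤ (k / n) * (1 + j)` the loss in the lower bound is governed by
`1 + ∑ j, j * x ^ j ≤ 3`.
-/

section QPochhammer

/-- The finite `q`-Pochhammer symbol `(x; x)_n = (1 - x) * (1 - x ^ 2) * ⋯ * (1 - x ^ n)`. For
`x = 1 / q` it is the proportion of invertible matrices among all `n × n` matrices. -/
def qPochhammer {R : Type*} [CommRing R] (x : R) (n : ℕ) : R :=
  ∏ m ∈ range n, (1 - x ^ (m + 1))

lemma qPochhammer_succ {R : Type*} [CommRing R] (x : R) (n : ℕ) :
    qPochhammer x (n + 1) = qPochhammer x n * (1 - x ^ (n + 1)) :=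
  prod_range_succ _ _

variable {x : ℝ}

lemma qPochhammer_pos (hx₀ : 0 ≤ x) (hx₁ : x < 1) (n : ℕ) : 0 < qPochhammer x n :=
  prod_pos fun _ _ ↦ sub_pos.2 (pow_lt_one₀ hx₀ hx₁ (Nat.succ_ne_zero _))

lemma qPochhammer_antitone (hx₀ : 0 ≤ x) (hx₁ : x < 1) : Antitone (qPochhammer x) :=
  antitone_nat_of_succ_le fun n ↦ by
    rw [qPochhammer_succ]
    exact mul_le_of_le_one_right (qPochhammer_pos hx₀ hx₁ n).le (sub_le_self _ (by positivity))

lemma pow_div_qPochhammer_succ (hx₀ : 0 ≤ x) (hx₁ : x < 1) (n : ℕ) :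
    x ^ (n + 1) / qPochhammer x (n + 1) = 1 / qPochhammer x (n + 1) - 1 / qPochhammer x n := by
  have hn := (qPochhammer_pos hx₀ hx₁ n).ne'
  have hn' := (qPochhammer_pos hx₀ hx₁ (n + 1)).ne'
  rw [div_sub_div _ _ hn' hn, div_eq_div_iff hn' (mul_ne_zero hn' hn), qPochhammer_succ]
  ring

lemma sum_pow_div_qPochhammer (hx₀ : 0 ≤ x) (hx₁ : x < 1) (n : ℕ) :
    ∑ j ∈ range (n + 1), x ^ j / qPochhammer x j = 1 / qPochhammer x n := by
  induction n with
  | zero => simp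
  | succ n ih => rw [sum_range_succ, ih, pow_div_qPochhammer_succ hx₀ hx₁, add_sub_cancel]

end QPochhammer

section Weights

/-- The weights `x ^ j * (x; x)_n / (x; x)_j`. For `x = 1 / q` this is the probability that the
nilpotent Fitting component of a uniformly random `n × n` matrix has dimension `j`. -/
noncomputable def fittingWeight (x : ℝ) (n j : ℕ) : ℝ :=
  x ^ j * (qPochhammer x n / qPochhammer x j)

variable {x : ℝ}

lemma fittingWeight_nonneg (hx₀ : 0 ≤ x) (hx₁ : x < 1) (n j : ℕ) : 0 ≤ fittingWeight x n j :=
  mul_nonneg (pow_nonneg hx₀ j)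
    (div_nonneg (qPochhammer_pos hx₀ hx₁ n).le (qPochhammer_pos hx₀ hx₁ j).le)

lemma sum_fittingWeight (hx₀ : 0 ≤ x) (hx₁ : x < 1) (n : ℕ) :
    ∑ j ∈ range n, fittingWeight x n j = 1 - x ^ n := by
  have hn := (qPochhammer_pos hx₀ hx₁ n).ne'
  have hsum : ∑ j ∈ range (n + 1), fittingWeight x n j = 1 :=
    calc ∑ j ∈ range (n + 1), fittingWeight x n j
        = qPochhammer x n * ∑ j ∈ range (n + 1), x ^ j / qPochhammer x j := by
          rw [mul_sum]
          exact sum_congr rfl fun j _ ↦ mul_div_left_comm _ _ _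
      _ = 1 := by rw [sum_pow_div_qPochhammer hx₀ hx₁, mul_one_div_cancel hn]
  rw [sum_range_succ, fittingWeight, div_self hn, mul_one] at hsum
  exact eq_sub_of_add_eq hsum

lemma fittingWeight_le (hx₀ : 0 ≤ x) (hx₁ : x < 1) {n j : ℕ} (hj : j < n) :
    fittingWeight x n j ≤ x ^ j * (1 - x ^ n) := by
  obtain ⟨m, rfl⟩ := Nat.exists_eq_add_one_of_ne_zero (Nat.ne_zero_of_lt hj)
  have hratio : qPochhammer x m / qPochhammer x j ≤ 1 :=
    div_le_one_of_le₀ (qPochhammer_antitone hx₀ hx₁ (Nat.lt_succ_iff.1 hj))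
      (qPochhammer_pos hx₀ hx₁ j).le
  have hx : 0 ≤ 1 - x ^ (m + 1) := sub_nonneg.2 (pow_le_one₀ hx₀ hx₁.le)
  rw [fittingWeight, qPochhammer_succ, mul_div_right_comm]
  gcongr
  exact mul_le_of_le_one_left hx hratio

lemma sum_mul_fittingWeight_le (hx₀ : 0 ≤ x) (hx₁ : x < 1) (n : ℕ) :
    ∑ j ∈ range n, (j : ℝ) * fittingWeight x n j ≤ x / (1 - x) ^ 2 * (1 - x ^ n) := by
  have hgeom : ∑ j ∈ range n, (j : ℝ) * x ^ j ≤ x / (1 - x) ^ 2 :=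
    sum_le_hasSum _ (fun j _ ↦ by positivity)
      (hasSum_coe_mul_geometric_of_norm_lt_one (by rwa [Real.norm_of_nonneg hx₀]))
  calc ∑ j ∈ range n, (j : ℝ) * fittingWeight x n j
      ≤ ∑ j ∈ range n, (j : ℝ) * (x ^ j * (1 - x ^ n)) := by
        gcongr with j hj
        exact fittingWeight_le hx₀ hx₁ (mem_range.1 hj)
    _ = (∑ j ∈ range n, (j : ℝ) * x ^ j) * (1 - x ^ n) := by
        rw [sum_mul]
        exact sum_congr rfl fun j _ ↦ (mul_assoc _ _ _).symm
    _ ≤ x / (1 - x) ^ 2 * (1 - x ^ n) := by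
        gcongr
        exact sub_nonneg.2 (pow_le_one₀ hx₀ hx₁.le)

lemma div_sub_le_div_mul_one_add {k : ℝ} (hk : 0 ≤ k) {n j : ℕ} (hj : j < n) :
    k / (n - j : ℕ) ≤ k / n * (1 + j) := by
  have hnj : ((n - j : ℕ) : ℝ) = n - j := Nat.cast_sub hj.le
  have hj' : (j : ℝ) + 1 ≤ n := by exact_mod_cast hj
  have hj₀ : (0 : ℝ) ≤ j := Nat.cast_nonneg j
  rw [hnj, div_mul_eq_mul_div, div_le_div_iff₀ (by linarith) (by linarith), mul_assoc]
  gcongr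
  nlinarith [mul_nonneg hj₀ (sub_nonneg.2 hj')]

lemma le_sum_fittingWeight_mul {n : ℕ} {a k : ℝ} (hx₀ : 0 ≤ x) (hx₁ : x < 1) (hk : 0 ≤ k)
    {r : ℕ → ℝ} (hr₀ : 0 ≤ r 0) (hr : ∀ i, 1 ≤ i → i ≤ n → a - k / i ≤ r i) :
    (a - (1 + x / (1 - x) ^ 2) * k / n) * (1 - x ^ n) ≤
      ∑ j ∈ range (n + 1), fittingWeight x n j * r (n - j) := by
  have hw := fittingWeight_nonneg hx₀ hx₁ n
  have hpoint : ∀ j ∈ range n, a - k / n * (1 + j) ≤ r (n - j) := fun j hj ↦ by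
    have hj : j < n := mem_range.1 hj
    have := hr (n - j) (by lia) (by lia)
    have := div_sub_le_div_mul_one_add hk hj
    linarith
  calc (a - (1 + x / (1 - x) ^ 2) * k / n) * (1 - x ^ n)
      = (a - k / n) * (1 - x ^ n) - k / n * (x / (1 - x) ^ 2 * (1 - x ^ n)) := by ring
    _ ≤ (a - k / n) * (1 - x ^ n) - k / n * ∑ j ∈ range n, (j : ℝ) * fittingWeight x n j := by
        gcongr
        exact sum_mul_fittingWeight_le hx₀ hx₁ n
    _ = ∑ j ∈ range n, fittingWeight x n j * (a - k / n * (1 + j)) := by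
        rw [← sum_fittingWeight hx₀ hx₁, mul_sum, mul_sum, ← sum_sub_distrib]
        exact sum_congr rfl fun j _ ↦ by ring
    _ ≤ ∑ j ∈ range n, fittingWeight x n j * r (n - j) :=
        sum_le_sum fun j hj ↦ mul_le_mul_of_nonneg_left (hpoint j hj) (hw j)
    _ ≤ ∑ j ∈ range (n + 1), fittingWeight x n j * r (n - j) := by
        rw [sum_range_succ, Nat.sub_self]
        exact le_add_of_nonneg_right (mul_nonneg (hw n) hr₀)

lemma div_one_sub_sq_le_two (hx : x ≤ 1 / 2) : x / (1 - x) ^ 2 ≤ 2 := by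
  rw [div_le_iff₀ (by nlinarith)]
  nlinarith

lemma pow_lt_one_div (hx₀ : 0 ≤ x) (hx : x ≤ 1 / 2) {n : ℕ} (hn : 0 < n) :
    x ^ n < 1 / n :=
  calc x ^ n ≤ (1 / 2) ^ n := by gcongr
    _ = 1 / 2 ^ n := one_div_pow 2 n
    _ < 1 / n := one_div_lt_one_div_of_lt (Nat.cast_pos.2 hn) (mod_cast Nat.lt_two_pow_self)

lemma sub_add_div_lt_sub_div_mul_one_sub_pow {n : ℕ} {a b : ℝ} (hx₀ : 0 < x) (hx : x ≤ 1 / 2)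
    (hn : 0 < n) (ha : 0 < a) (hb : 0 ≤ b) :
    a - (a + b) / n < (a - b / n) * (1 - x ^ n) := by
  have hax : a * x ^ n < a * (1 / n) := mul_lt_mul_of_pos_left (pow_lt_one_div hx₀.le hx hn) ha
  have hbx : 0 ≤ b / n * x ^ n := by positivity
  calc a - (a + b) / n = a - b / n - a * (1 / n) := by ring
    _ < a - b / n - a * x ^ n + b / n * x ^ n := by linarith
    _ = (a - b / n) * (1 - x ^ n) := by ring

end Weights

section BlockDiagonal

variable {ι κ m R : Type*} [Fintype ι] [Fintype κ] [Fintype m]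
  [DecidableEq ι] [DecidableEq κ] [DecidableEq m]

/-- The block-diagonal embedding `(Y, Z) ↦ diag(Y, Z)` as a ring homomorphism. The equivalence `e`
says which rows and columns of the big matrix carry `Y` and which carry `Z`. -/
def blockDiagHom [Semiring R] (e : ι ⊕ κ ≃ m) :
    Matrix ι ι R × Matrix κ κ R →+* Matrix m m R where
  toFun p := reindexRingEquiv R e (fromBlocks p.1 0 0 p.2)
  map_one' := by simp
  map_mul' p r := by simp [fromBlocks_multiply]
  map_zero' := by simp
  map_add' p r := by rw [← map_add, fromBlocks_add, add_zero, add_zero]; rfl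

lemma blockDiagHom_apply [Semiring R] (e : ι ⊕ κ ≃ m) (Y : Matrix ι ι R) (Z : Matrix κ κ R) :
    blockDiagHom e (Y, Z) = reindexRingEquiv R e (fromBlocks Y 0 0 Z) :=
  rfl

lemma blockDiagHom_injective [Semiring R] (e : ι ⊕ κ ≃ m) :
    Function.Injective (blockDiagHom (R := R) e) := by
  rintro ⟨Y, Z⟩ ⟨Y', Z'⟩ h
  obtain ⟨hY, -, -, hZ⟩ := fromBlocks_inj.1 ((reindexRingEquiv R e).injective h)
  exact Prod.ext hY hZ

lemma embedBlock_eq_blockDiagHom {F : Type*} [Field F] {i j : ℕ} (Y : Matrix (Fin i) (Fin i) F) :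
    embedBlock (i + j) Y = blockDiagHom finSumFinEquiv (Y, (0 : Matrix (Fin j) (Fin j) F)) := by
  ext r c
  obtain ⟨r, rfl⟩ := finSumFinEquiv.surjective r
  obtain ⟨c, rfl⟩ := finSumFinEquiv.surjective c
  rcases r with r | r <;> rcases c with c | c <;> simp [embedBlock, blockDiagHom_apply]

lemma rank_blockDiagHom_one_zero {F : Type*} [Field F] (e : ι ⊕ κ ≃ m) :
    (blockDiagHom e ((1 : Matrix ι ι F), (0 : Matrix κ κ F))).rank = Fintype.card ι := by
  classical
  have hdiag : fromBlocks (1 : Matrix ι ι F) 0 0 (0 : Matrix κ κ F) =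
      diagonal (Sum.elim 1 0) := by
    rw [← fromBlocks_diagonal]
    simp
  rw [blockDiagHom_apply, coe_reindexRingEquiv, rank_reindex, hdiag, rank_diagonal,
    Fintype.card_subtype, card_filter, Fintype.sum_sum_type]
  simp

variable [CommRing R]

/-- The block-diagonal embedding `(A, B) ↦ diag(A, B)` of general linear groups. -/
def blockDiagGL (e : ι ⊕ κ ≃ m) : GL ι R × GL κ R →* GL m R :=
  (Units.map (blockDiagHom e).toMonoidHom).comp MulEquiv.prodUnits.symm.toMonoidHom

lemma val_blockDiagGL (e : ι ⊕ κ ≃ m) (A : GL ι R) (B : GL κ R) :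
    (blockDiagGL e (A, B)).val = blockDiagHom e (A.val, B.val) :=
  rfl

lemma blockDiagGL_injective (e : ι ⊕ κ ≃ m) : Function.Injective (blockDiagGL (R := R) e) :=
  (Units.map_injective (blockDiagHom_injective e)).comp MulEquiv.prodUnits.symm.injective

lemma conj_blockDiagHom (e : ι ⊕ κ ≃ m) (A Y : GL ι R) (B : GL κ R) (Z : Matrix κ κ R) :
    (blockDiagGL e (A, B)).val * blockDiagHom e (Y.val, Z) * ((blockDiagGL e (A, B))⁻¹).val =
      blockDiagHom e ((A * Y * A⁻¹).val, B.val * Z * B⁻¹.val) := by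
  rw [← map_inv, Prod.inv_mk, val_blockDiagGL, val_blockDiagGL, ← map_mul, ← map_mul]
  rfl

-- Iterating `Y * B = B * Z` gives `Y ^ n * B = B * Z ^ n = 0` with `Y ^ n` invertible.
lemma eq_zero_of_mul_eq_mul_of_isUnit_of_isNilpotent {Y : Matrix ι ι R} {Z : Matrix κ κ R}
    {B : Matrix ι κ R} (hY : IsUnit Y) (hZ : IsNilpotent Z) (h : Y * B = B * Z) : B = 0 := by
  obtain ⟨n, hn⟩ := hZ
  have hpow : ∀ k, Y ^ k * B = B * Z ^ k := fun k ↦ by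
    induction k with
    | zero => simp
    | succ k ih => rw [pow_succ, Matrix.mul_assoc, h, ← Matrix.mul_assoc, ih, Matrix.mul_assoc,
        ← pow_succ]
  obtain ⟨u, hu⟩ := hY.pow n
  calc B = u⁻¹.val * (Y ^ n * B) := by
        rw [← hu, ← Matrix.mul_assoc, ← Units.val_mul, inv_mul_cancel, Units.val_one,
          Matrix.one_mul]
    _ = 0 := by rw [hpow, hn, Matrix.mul_zero, Matrix.mul_zero]

lemma mem_range_blockDiagGL_of_mul_eq_mul (e : ι ⊕ κ ≃ m) {Y Y' : GL ι R} {Z Z' : Matrix κ κ R}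
    (hZ : IsNilpotent Z) (hZ' : IsNilpotent Z') {h : GL m R}
    (hh : h.val * blockDiagHom e (Y.val, Z) = blockDiagHom e (Y'.val, Z') * h.val) :
    h ∈ Set.range (blockDiagGL (R := R) e) := by
  obtain ⟨H, hH⟩ := (reindexRingEquiv R e).surjective h.val
  have hH_unit : IsUnit H := (MulEquiv.isUnit_map (reindexRingEquiv R e)).1 (hH ▸ h.isUnit)
  rw [← fromBlocks_toBlocks H] at hH hH_unit
  rw [← hH, blockDiagHom_apply, blockDiagHom_apply, ← map_mul, ← map_mul] at hh
  replace hh := (reindexRingEquiv R e).injective hh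
  simp only [fromBlocks_multiply, fromBlocks_inj, Matrix.mul_zero, Matrix.zero_mul, zero_add,
    add_zero] at hh
  obtain ⟨-, h₁₂, h₂₁, -⟩ := hh
  replace h₁₂ : H.toBlocks₁₂ = 0 :=
    eq_zero_of_mul_eq_mul_of_isUnit_of_isNilpotent Y'.isUnit hZ h₁₂.symm
  replace h₂₁ : H.toBlocks₂₁ = 0 := transpose_eq_zero.1 <|
    eq_zero_of_mul_eq_mul_of_isUnit_of_isNilpotent
      ((isUnit_transpose Y.val).2 Y.isUnit) (isNilpotent_transpose_iff.2 hZ')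
      (by rw [← transpose_mul, ← transpose_mul, h₂₁])
  rw [h₁₂, h₂₁] at hH hH_unit
  obtain ⟨⟨A, hA⟩, ⟨B, hB⟩⟩ := isUnit_fromBlocks_zero₁₂.1 hH_unit
  exact ⟨(A, B), Units.ext (by rw [val_blockDiagGL, blockDiagHom_apply, hA, hB, hH])⟩

end BlockDiagonal

section Fitting

lemma isCompl_range_ker_pow_finrank {K V : Type*} [Field K] [AddCommGroup V] [Module K V]
    [FiniteDimensional K V] (f : Module.End K V) :
    IsCompl (LinearMap.range (f ^ Module.finrank K V))
      (LinearMap.ker (f ^ Module.finrank K V)) := by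
  refine (Submodule.isCompl_iff_disjoint _ _
    (LinearMap.finrank_range_add_finrank_ker _).ge).2 (Submodule.disjoint_def.2 ?_)
  rintro _ ⟨v, rfl⟩ hv
  have hv' : v ∈ LinearMap.ker (f ^ (Module.finrank K V + Module.finrank K V)) := by
    rwa [pow_add]
  rwa [Module.End.ker_pow_eq_ker_pow_finrank_of_le (Nat.le_add_right _ _)] at hv'

lemma mapsTo_range_pow {R M : Type*} [Semiring R] [AddCommMonoid M] [Module R M]
    (f : Module.End R M) (n : ℕ) :
    ∀ v ∈ LinearMap.range (f ^ n), f v ∈ LinearMap.range (f ^ n) := by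
  rintro _ ⟨v, rfl⟩
  exact ⟨f v, by rw [← Module.End.mul_apply, ← Module.End.mul_apply, pow_mul_comm']⟩

lemma mapsTo_ker_pow {R M : Type*} [Semiring R] [AddCommMonoid M] [Module R M]
    (f : Module.End R M) (n : ℕ) : ∀ v ∈ LinearMap.ker (f ^ n), f v ∈ LinearMap.ker (f ^ n) := by
  intro v hv
  rw [LinearMap.mem_ker] at hv ⊢
  rw [← Module.End.mul_apply, pow_mul_comm', Module.End.mul_apply, hv, map_zero]

lemma isNilpotent_restrict_ker_pow {R M : Type*} [Semiring R] [AddCommMonoid M] [Module R M]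
    (f : Module.End R M) (n : ℕ) : IsNilpotent (f.restrict (mapsTo_ker_pow f n)) :=
  ⟨n, LinearMap.ext fun v ↦ Subtype.ext (by
    rw [Module.End.pow_restrict]
    exact v.2)⟩

lemma isUnit_restrict_range_pow_finrank {K V : Type*} [Field K] [AddCommGroup V] [Module K V]
    [FiniteDimensional K V] (f : Module.End K V) :
    IsUnit (f.restrict (mapsTo_range_pow f (Module.finrank K V))) := by
  rw [LinearMap.isUnit_iff_ker_eq_bot, LinearMap.ker_eq_bot']
  intro v hv
  have hfv : (f ^ 1) v = 0 := by simpa using congrArg Subtype.val hv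
  exact Subtype.ext <| (Submodule.disjoint_def.1 (isCompl_range_ker_pow_finrank f).disjoint) v v.2
    (Module.End.ker_pow_le_ker_pow_finrank f 1 hfv)

lemma exists_conj_blockDiagHom_toMatrix {K ι κ m : Type*} [Field K] [Fintype ι] [Fintype κ]
    [Fintype m] [DecidableEq ι] [DecidableEq κ] [DecidableEq m] (e : ι ⊕ κ ≃ m) (X : Matrix m m K)
    {p q : Submodule K (m → K)} (hpq : IsCompl p q) (b : Module.Basis ι K p)
    (c : Module.Basis κ K q) (hp : ∀ v ∈ p, X.toLin' v ∈ p) (hq : ∀ v ∈ q, X.toLin' v ∈ q) :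
    ∃ g : GL m K, g.val * blockDiagHom e (LinearMap.toMatrix b b (X.toLin'.restrict hp),
      LinearMap.toMatrix c c (X.toLin'.restrict hq)) * g⁻¹.val = X := by
  set T := X.toLin'
  set φ := Submodule.prodEquivOfIsCompl p q hpq
  set s := Pi.basisFun K m
  set bc := ((b.prod c).map φ).reindex e
  have hT : ∀ y, T (φ y) = φ ((T.restrict hp).prodMap (T.restrict hq) y) := fun y ↦ by
    simp [φ]
  have hblocks : blockDiagHom e (LinearMap.toMatrix b b (T.restrict hp),
      LinearMap.toMatrix c c (T.restrict hq)) = LinearMap.toMatrix bc bc T := by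
    rw [blockDiagHom_apply, ← LinearMap.toMatrix_prodMap]
    ext r c
    simp [bc, LinearMap.toMatrix_apply, hT, -Module.Basis.prod_apply]
  refine ⟨⟨s.toMatrix bc, bc.toMatrix s, s.toMatrix_mul_toMatrix_flip _,
    bc.toMatrix_mul_toMatrix_flip _⟩, ?_⟩
  rw [hblocks]
  exact (basis_toMatrix_mul_linearMap_toMatrix_mul_basis_toMatrix _ _ _ _ _).trans
    (LinearMap.toMatrix'_toLin' X)

lemma pow_eq_zero_of_isNilpotent {K m : Type*} [Field K] [Fintype m] [DecidableEq m]
    {Z : Matrix m m K} (hZ : IsNilpotent Z) {n : ℕ} (hn : Fintype.card m ≤ n) : Z ^ n = 0 := by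
  refine pow_eq_zero_of_le hn (toLinAlgEquiv'.injective ?_)
  rw [map_pow, map_zero, ← Module.finrank_fintype_fun_eq_card K]
  simpa [(hZ.map toLinAlgEquiv').charpoly_eq_X_pow_finrank] using
    LinearMap.aeval_self_charpoly (toLinAlgEquiv' Z)

lemma mulVecLin_pow {R m : Type*} [CommSemiring R] [Fintype m] [DecidableEq m]
    (X : Matrix m m R) (n : ℕ) : X.mulVecLin ^ n = (X ^ n).mulVecLin :=
  (toLin'_pow X n).symm

lemma fittingProj_eq_mulVecLin {K : Type*} [Field K] {d : ℕ} {X E : Matrix (Fin d) (Fin d) K}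
    (hE : IsIdempotentElem E) (u : GL (Fin d) K) (hEu : X ^ d = E * u.val)
    (huE : X ^ d = u.val * E) : fittingProj X = E.mulVecLin := by
  have hE' : IsIdempotentElem E.mulVecLin := hE.map toLinAlgEquiv'
  have hinv : Vinv X = LinearMap.range E.mulVecLin := by
    rw [Vinv, mulVecLin_pow, hEu, mulVecLin_mul, LinearMap.range_comp_of_range_eq_top]
    exact LinearMap.range_eq_top.2 (mulVec_surjective_iff_isUnit.2 u.isUnit)
  have hnil : Vnil X = LinearMap.ker E.mulVecLin := by
    rw [Vnil, mulVecLin_pow, huE, mulVecLin_mul, LinearMap.ker_comp_of_ker_eq_bot]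
    exact LinearMap.ker_eq_bot.2 (mulVec_injective_of_isUnit u.isUnit)
  have hcompl : IsCompl (Vinv X) (Vnil X) := by
    rw [hinv, hnil]
    exact LinearMap.IsIdempotentElem.isCompl hE'
  rw [fittingProj, dif_pos hcompl, LinearMap.IsIdempotentElem.eq_projection hE']
  change (Vinv X).projection (Vnil X) hcompl = _
  congr 1

end Fitting

section FittingForm

variable {F : Type*} [Field F] {i j : ℕ}

lemma blockDiagHom_pow_eq_mul (Y : GL (Fin i) F) {Z : Matrix (Fin j) (Fin j) F}
    (hZ : IsNilpotent Z) :
    ∃ u : GL (Fin (i + j)) F,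
      blockDiagHom finSumFinEquiv (Y.val, Z) ^ (i + j) =
        blockDiagHom finSumFinEquiv (1, 0) * u.val ∧
      blockDiagHom finSumFinEquiv (Y.val, Z) ^ (i + j) =
        u.val * blockDiagHom finSumFinEquiv (1, 0) := by
  have hZ' : Z ^ (i + j) = 0 := pow_eq_zero_of_isNilpotent hZ (by simp)
  refine ⟨blockDiagGL finSumFinEquiv (Y ^ (i + j), 1), ?_, ?_⟩ <;>
    rw [val_blockDiagGL, ← map_pow, ← map_mul] <;> simp [hZ']

lemma fittingProj_blockDiagHom (Y : GL (Fin i) F) {Z : Matrix (Fin j) (Fin j) F}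
    (hZ : IsNilpotent Z) :
    fittingProj (blockDiagHom finSumFinEquiv (Y.val, Z)) =
      (blockDiagHom finSumFinEquiv (1, 0)).mulVecLin := by
  obtain ⟨u, hEu, huE⟩ := blockDiagHom_pow_eq_mul Y hZ
  refine fittingProj_eq_mulVecLin ?_ u hEu huE
  exact IsIdempotentElem.map (f := blockDiagHom finSumFinEquiv) (by simp [IsIdempotentElem])

/-- Triples `(g, Y, Z)` with `Y` invertible of size `i` and `Z` nilpotent of size `j`, presenting
the matrix `g * diag(Y, Z) * g⁻¹` together with bases of its two Fitting components. -/
abbrev FittingData (F : Type*) [Field F] (i j : ℕ) : Type _ :=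
  GL (Fin (i + j)) F × GL (Fin i) F × {Z : Matrix (Fin j) (Fin j) F // IsNilpotent Z}

/-- The matrix `g * diag(Y, Z) * g⁻¹` presented by `(g, Y, Z)`. Its invertible Fitting component has
dimension `i` and its nilpotent one has dimension `j`. -/
def fittingForm (t : FittingData F i j) :
    Matrix (Fin (i + j)) (Fin (i + j)) F :=
  t.1.val * blockDiagHom finSumFinEquiv (t.2.1.val, t.2.2.val) * t.1⁻¹.val

lemma rank_fittingForm_pow (t : FittingData F i j) : (fittingForm t ^ (i + j)).rank = i := by
  obtain ⟨g, Y, Z, hZ⟩ := t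
  obtain ⟨u, hEu, -⟩ := blockDiagHom_pow_eq_mul Y hZ
  have hdet (g : GL (Fin (i + j)) F) : IsUnit g.val.det := (isUnit_iff_isUnit_det _).1 g.isUnit
  rw [fittingForm, Units.conj_pow, rank_mul_eq_left_of_isUnit_det _ _ (hdet _),
    rank_mul_eq_right_of_isUnit_det _ _ (hdet _), hEu,
    rank_mul_eq_left_of_isUnit_det _ _ (hdet _), rank_blockDiagHom_one_zero, Fintype.card_fin]

lemma exists_fittingForm_eq {X : Matrix (Fin (i + j)) (Fin (i + j)) F}
    (hX : (X ^ (i + j)).rank = i) : ∃ t : FittingData F i j, fittingForm t = X := by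
  set T := X.toLin'
  set p := LinearMap.range (T ^ Module.finrank F (Fin (i + j) → F))
  set q := LinearMap.ker (T ^ Module.finrank F (Fin (i + j) → F))
  have hp : Module.finrank F p = i := by
    calc Module.finrank F p = (X ^ Module.finrank F (Fin (i + j) → F)).rank := by
          rw [Matrix.rank, ← mulVecLin_pow]
          rfl
      _ = i := by rwa [Module.finrank_fin_fun]
  have hq : Module.finrank F q = j := by
    have hpq : Module.finrank F p + Module.finrank F q = i + j :=
      (Submodule.finrank_add_eq_of_isCompl (isCompl_range_ker_pow_finrank T)).trans
        (Module.finrank_fin_fun F)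
    lia
  set b := Module.finBasisOfFinrankEq F p hp
  set c := Module.finBasisOfFinrankEq F q hq
  obtain ⟨g, hg⟩ := exists_conj_blockDiagHom_toMatrix finSumFinEquiv X
    (isCompl_range_ker_pow_finrank T) b c (mapsTo_range_pow T _) (mapsTo_ker_pow T _)
  have hY := (LinearMap.isUnit_toMatrix_iff b).2 (isUnit_restrict_range_pow_finrank T)
  have hZ := (LinearMap.isNilpotent_toMatrix_iff c _).2 (isNilpotent_restrict_ker_pow T _)
  exact ⟨(g, hY.unit, ⟨_, hZ⟩), hg⟩

lemma IsNI.conj_mem_iff {d : ℕ} {N : Set (Matrix (Fin d) (Fin d) F)} (hN : IsNI N)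
    (g : GL (Fin d) F) {X : Matrix (Fin d) (Fin d) F} : g.val * X * g⁻¹.val ∈ N ↔ X ∈ N := by
  refine ⟨fun h ↦ ?_, fun h ↦ by simpa using hN.1 X h g⁻¹⟩
  simpa [Matrix.mul_assoc, ← Units.val_mul] using hN.1 _ h g

lemma IsNI.fittingForm_mem_iff {N : Set (Matrix (Fin (i + j)) (Fin (i + j)) F)} (hN : IsNI N)
    (t : FittingData F i j) :
    fittingForm t ∈ N ↔ t.2.1 ∈ NIsub N i := by
  obtain ⟨g, Y, Z, hZ⟩ := t
  rw [fittingForm, hN.conj_mem_iff, hN.2, fittingProj_blockDiagHom Y hZ, ← mulVecLin_mul,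
    ← toLin'_apply', LinearMap.toMatrix'_toLin', ← map_mul, Prod.mk_mul_mk, mul_one, mul_zero,
    ← embedBlock_eq_blockDiagHom]
  rfl

/-- The presentation obtained from `t` by changing the bases of the two Fitting components by `A`
and `B`. -/
def FittingData.changeBasis (t : FittingData F i j) (p : GL (Fin i) F × GL (Fin j) F) :
    FittingData F i j :=
  (t.1 * (blockDiagGL finSumFinEquiv p)⁻¹, p.1 * t.2.1 * p.1⁻¹,
    ⟨p.2.val * t.2.2.val * p.2⁻¹.val, t.2.2.2.imp fun n hn ↦ by
      rw [Units.conj_pow, hn, mul_zero, zero_mul]⟩)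

lemma fittingForm_changeBasis (t : FittingData F i j) (p : GL (Fin i) F × GL (Fin j) F) :
    fittingForm (t.changeBasis p) = fittingForm t := by
  simp only [fittingForm, FittingData.changeBasis]
  rw [← conj_blockDiagHom]
  simp only [Units.val_mul, _root_.mul_inv_rev, inv_inv, mul_assoc, Units.inv_mul_cancel_left]

lemma changeBasis_injective (t : FittingData F i j) : Function.Injective t.changeBasis :=
  fun _ _ h ↦ blockDiagGL_injective finSumFinEquiv <|
    inv_injective (mul_left_cancel (congrArg Prod.fst h))

lemma exists_changeBasis_eq {t t' : FittingData F i j} (h : fittingForm t' = fittingForm t) :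
    ∃ p, t.changeBasis p = t' := by
  obtain ⟨g, Y, Z⟩ := t
  obtain ⟨g', Y', Z'⟩ := t'
  have hconj : (g'⁻¹ * g).val * blockDiagHom finSumFinEquiv (Y.val, Z.val) =
      blockDiagHom finSumFinEquiv (Y'.val, Z'.val) * (g'⁻¹ * g).val := by
    have := congrArg (fun M ↦ g'⁻¹.val * M * g.val) h
    simpa [fittingForm, mul_assoc] using this.symm
  obtain ⟨⟨A, B⟩, hAB⟩ := mem_range_blockDiagGL_of_mul_eq_mul _ Z.2 Z'.2 hconj
  have hblocks := conj_blockDiagHom finSumFinEquiv A Y B Z.val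
  rw [hAB, hconj, mul_assoc, Units.mul_inv, mul_one] at hblocks
  obtain ⟨hY, hZ⟩ := Prod.ext_iff.1 (blockDiagHom_injective _ hblocks)
  refine ⟨(A, B), Prod.ext ?_ (Prod.ext (Units.ext hY.symm) (Subtype.ext hZ.symm))⟩
  change g * (blockDiagGL finSumFinEquiv (A, B))⁻¹ = g'
  rw [hAB, _root_.mul_inv_rev, inv_inv, mul_inv_cancel_left]

lemma card_fittingForm_fiber (t : FittingData F i j) :
    Nat.card {t' // fittingForm t' = fittingForm t} =
      Nat.card (GL (Fin i) F) * Nat.card (GL (Fin j) F) := by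
  rw [← Nat.card_prod]
  refine (Nat.card_congr <| Equiv.ofBijective
    (fun p ↦ ⟨t.changeBasis p, fittingForm_changeBasis t p⟩) ⟨fun p p' h ↦ ?_, ?_⟩).symm
  · exact changeBasis_injective t (congrArg Subtype.val h)
  · rintro ⟨t', ht'⟩
    exact (exists_changeBasis_eq ht').imp fun p hp ↦ Subtype.ext hp

end FittingForm

section Counting

lemma card_subtype_comp_eq_mul {α β : Type*} [Finite α] [Finite β] {f : α → β} {p : β → Prop}
    {c : ℕ} (h : ∀ b, p b → Nat.card {a // f a = b} = c) :
    Nat.card {a // p (f a)} = Nat.card {b // p b} * c := by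
  have := Fintype.ofFinite {b // p b}
  rw [← Nat.card_congr (Equiv.sigmaSubtypeFiberEquivSubtype f fun _ ↦ Iff.rfl), Nat.card_sigma,
    Finset.sum_congr rfl fun b _ ↦ h b.1 b.2]
  rw [sum_const, card_univ, smul_eq_mul, Nat.card_eq_fintype_card]

variable {F : Type*} [Field F]

lemma card_rank_pow_eq_mul [Finite F] {i j : ℕ} {N : Set (Matrix (Fin (i + j)) (Fin (i + j)) F)}
    (hN : IsNI N) :
    Nat.card {X // X ∈ N ∧ (X ^ (i + j)).rank = i} *
        (Nat.card (GL (Fin i) F) * Nat.card (GL (Fin j) F)) =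
      Nat.card (GL (Fin (i + j)) F) * (Nat.card (NIsub N i) *
        Nat.card {Z : Matrix (Fin j) (Fin j) F // IsNilpotent Z}) := by
  rw [← card_subtype_comp_eq_mul (f := fittingForm (F := F) (i := i) (j := j))]
  · simp only [rank_fittingForm_pow, and_true, hN.fittingForm_mem_iff, ← Nat.card_prod]
    exact Nat.card_congr
      { toFun t := (t.1.1, ⟨t.1.2.1, t.2⟩, t.1.2.2)
        invFun s := ⟨(s.1, s.2.1.1, s.2.2), s.2.1.2⟩ }
  · rintro X ⟨-, hX⟩
    obtain ⟨t, rfl⟩ := exists_fittingForm_eq hX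
    exact card_fittingForm_fiber t

lemma card_eq_sum_card_rank_pow [Finite F] {n : ℕ} (N : Set (Matrix (Fin n) (Fin n) F)) :
    Nat.card N = ∑ i ∈ range (n + 1), Nat.card {X // X ∈ N ∧ (X ^ n).rank = i} := by
  classical
  have := Fintype.ofFinite F
  have hrank : ∀ X : Matrix (Fin n) (Fin n) F, (X ^ n).rank ∈ range (n + 1) := fun X ↦
    mem_range_succ_iff.2 (by simpa using rank_le_width (X ^ n))
  rw [Nat.card_eq_fintype_card, Fintype.card_subtype,
    card_eq_sum_card_fiberwise fun X _ ↦ hrank X]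
  simp only [Nat.card_eq_fintype_card, Fintype.card_subtype, filter_filter]

/-- The ratio of the number of nilpotent matrices to the number of invertible matrices of size
`j`. -/
noncomputable def nilpotentRatio (F : Type*) [Field F] (j : ℕ) : ℝ :=
  Nat.card {Z : Matrix (Fin j) (Fin j) F // IsNilpotent Z} / Nat.card (GL (Fin j) F)

lemma card_GL_cast_ne_zero [Finite F] (n : ℕ) : (Nat.card (GL (Fin n) F) : ℝ) ≠ 0 :=
  Nat.cast_ne_zero.2 Nat.card_pos.ne'

lemma card_div_card_GL_eq_sum [Finite F] {n : ℕ} {N : Set (Matrix (Fin n) (Fin n) F)}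
    (hN : IsNI N) :
    (Nat.card N : ℝ) / Nat.card (GL (Fin n) F) =
      ∑ j ∈ range (n + 1),
        Nat.card (NIsub N (n - j)) / Nat.card (GL (Fin (n - j)) F) * nilpotentRatio F j := by
  rw [card_eq_sum_card_rank_pow, ← sum_range_reflect, Nat.cast_sum, sum_div]
  refine sum_congr rfl fun j hj ↦ ?_
  obtain ⟨i, rfl⟩ := Nat.exists_eq_add_of_le' (mem_range_succ_iff.1 hj)
  have hcount := congrArg (Nat.cast : ℕ → ℝ) (card_rank_pow_eq_mul hN)
  simp only [Nat.cast_mul] at hcount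
  rw [Nat.add_sub_cancel, Nat.add_sub_cancel, nilpotentRatio, div_mul_div_comm,
    div_eq_div_iff (card_GL_cast_ne_zero _)
      (mul_ne_zero (card_GL_cast_ne_zero _) (card_GL_cast_ne_zero _)), hcount, mul_comm]

lemma card_GL_eq_pow_mul_qPochhammer (F : Type*) [Field F] [Fintype F] (n : ℕ) :
    (Nat.card (GL (Fin n) F) : ℝ) =
      (Fintype.card F : ℝ) ^ (n ^ 2) * qPochhammer (Fintype.card F : ℝ)⁻¹ n := by
  have hq : (Fintype.card F : ℝ) ≠ 0 := Nat.cast_ne_zero.2 Fintype.card_ne_zero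
  have hpow : (Fintype.card F : ℝ) ^ (n ^ 2) = ∏ _m ∈ range n, (Fintype.card F : ℝ) ^ n := by
    rw [prod_const, card_range, ← pow_mul, sq]
  rw [card_GL_field, Fin.prod_univ_eq_prod_range (fun m ↦ Fintype.card F ^ n - Fintype.card F ^ m),
    ← prod_range_reflect, Nat.cast_prod, qPochhammer, hpow, ← prod_mul_distrib]
  refine prod_congr rfl fun m hm ↦ ?_
  obtain ⟨s, rfl⟩ := Nat.exists_eq_add_of_le' (Nat.succ_le_of_lt (mem_range.1 hm))
  have hs : s + m.succ - 1 - m = s := by lia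
  rw [hs, Nat.cast_sub (Nat.pow_le_pow_right Fintype.card_pos (Nat.le_add_right _ _)), mul_sub,
    mul_one, inv_pow, Nat.cast_pow, Nat.cast_pow, pow_add _ s, mul_inv_cancel_right₀]
  exact pow_ne_zero _ hq

lemma card_matrix_eq_pow (F : Type*) [Field F] [Fintype F] (n : ℕ) :
    Nat.card (Matrix (Fin n) (Fin n) F) = Fintype.card F ^ (n ^ 2) := by
  rw [Module.natCard_eq_pow_finrank (K := F), Module.finrank_matrix]
  simp [sq]

lemma isNI_univ {n : ℕ} : IsNI (Set.univ : Set (Matrix (Fin n) (Fin n) F)) :=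
  ⟨fun _ _ _ ↦ Set.mem_univ _, fun _ ↦ Iff.rfl⟩

lemma NIsub_univ {n : ℕ} (i : ℕ) :
    NIsub (Set.univ : Set (Matrix (Fin n) (Fin n) F)) i = Set.univ :=
  rfl

lemma sum_nilpotentRatio (F : Type*) [Field F] [Fintype F] (n : ℕ) :
    ∑ j ∈ range (n + 1), nilpotentRatio F j = 1 / qPochhammer (Fintype.card F : ℝ)⁻¹ n := by
  have hq : (Fintype.card F : ℝ) ≠ 0 := Nat.cast_ne_zero.2 Fintype.card_ne_zero
  have hsum := card_div_card_GL_eq_sum (isNI_univ (F := F) (n := n))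
  simp only [NIsub_univ, Nat.card_univ, div_self (card_GL_cast_ne_zero _), one_mul] at hsum
  rw [← hsum, card_GL_eq_pow_mul_qPochhammer, card_matrix_eq_pow, Nat.cast_pow,
    ← div_div, div_self (pow_ne_zero _ hq)]

-- Equivalently, there are `q ^ (j ^ 2 - j)` nilpotent matrices of size `j` (Fine and Herstein).
lemma nilpotentRatio_eq (F : Type*) [Field F] [Fintype F] (j : ℕ) :
    nilpotentRatio F j =
      (Fintype.card F : ℝ)⁻¹ ^ j / qPochhammer (Fintype.card F : ℝ)⁻¹ j := by
  have hx₀ : 0 ≤ (Fintype.card F : ℝ)⁻¹ := by positivity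
  have hx₁ : (Fintype.card F : ℝ)⁻¹ < 1 :=
    inv_lt_one_of_one_lt₀ (Nat.one_lt_cast.2 Fintype.one_lt_card)
  have hsum (n : ℕ) := (sum_nilpotentRatio F n).trans (sum_pow_div_qPochhammer hx₀ hx₁ n).symm
  cases j with
  | zero => simpa using hsum 0
  | succ j =>
    have h := hsum (j + 1)
    rw [sum_range_succ, hsum, sum_range_succ _ (j + 1)] at h
    exact add_left_cancel h

lemma card_div_pow_eq_sum_fittingWeight [Fintype F] {n : ℕ}
    {N : Set (Matrix (Fin n) (Fin n) F)} (hN : IsNI N) :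
    (Nat.card N : ℝ) / (Fintype.card F : ℝ) ^ (n ^ 2) =
      ∑ j ∈ range (n + 1), fittingWeight (Fintype.card F : ℝ)⁻¹ n j *
        (Nat.card (NIsub N (n - j)) / Nat.card (GL (Fin (n - j)) F)) := by
  have hGL := card_GL_cast_ne_zero (F := F) n
  have hq : (Fintype.card F : ℝ) ^ (n ^ 2) =
      Nat.card (GL (Fin n) F) / qPochhammer (Fintype.card F : ℝ)⁻¹ n := by
    rw [card_GL_eq_pow_mul_qPochhammer] at hGL ⊢
    rw [mul_div_cancel_right₀ _ (right_ne_zero_of_mul hGL)]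
  rw [hq, div_div_eq_mul_div, mul_div_right_comm, card_div_card_GL_eq_sum hN, sum_mul]
  refine sum_congr rfl fun j _ ↦ ?_
  rw [nilpotentRatio_eq, fittingWeight]
  ring

end Counting

theorem stmt8 (q d : ℕ) (hq : IsPrimePow q) (hd : 0 < d)
    (F : Type*) [Field F] [Fintype F] (hF : Fintype.card F = q)
    (N : Set (Matrix (Fin d) (Fin d) F)) (hN : IsNI N) (a k : ℝ) (ha : 0 < a) (hk : 0 < k)
    (hbound : ∀ i : ℕ, 1 ≤ i → i ≤ d →
      a - k / (i : ℝ) ≤ (Nat.card (NIsub N i) : ℝ) / Nat.card (GL (Fin i) F)) :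
    (a - 3 * k / (d : ℝ)) * (1 - ((q : ℝ))⁻¹ ^ d) ≤ (Nat.card N : ℝ) / (q : ℝ) ^ (d ^ 2) ∧
      a - (a + 3 * k) / (d : ℝ) < (a - 3 * k / (d : ℝ)) * (1 - ((q : ℝ))⁻¹ ^ d) := by
  subst hF
  set x := (Fintype.card F : ℝ)⁻¹
  have hx₀ : 0 < x := inv_pos.2 (Nat.cast_pos.2 Fintype.card_pos)
  have hx : x ≤ 1 / 2 := by
    rw [one_div]
    exact inv_anti₀ two_pos (mod_cast hq.two_le)
  have hx₁ : x < 1 := hx.trans_lt one_half_lt_one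
  have hc : 1 + x / (1 - x) ^ 2 ≤ 3 := by linarith [div_one_sub_sq_le_two hx]
  refine ⟨?_, sub_add_div_lt_sub_div_mul_one_sub_pow hx₀ hx hd ha (by positivity)⟩
  rw [card_div_pow_eq_sum_fittingWeight hN]
  calc (a - 3 * k / d) * (1 - x ^ d)
      ≤ (a - (1 + x / (1 - x) ^ 2) * k / d) * (1 - x ^ d) := by
        gcongr
        exact sub_nonneg.2 (pow_le_one₀ hx₀.le hx₁.le)
    _ ≤ _ := le_sum_fittingWeight_mul hx₀.le hx₁ hk.le (by positivity) hbound
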